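/- For every cap body K in Euclidean 3-space, the illumination number of K is at most 6. -/

import Mathlib

open Metric Real Set

noncomputable section

/-- A unit vector `v` illuminates the boundary point `p` of `K` if moving from `p`
in direction `v` enters the interior of `K`. A finite set `V` of unit vectors
illuminates `K` if every boundary point is illuminated by some member of `V`.
The illumination number is the least cardinality of such a set. -/
def illumNum (K : Set (EuclideanSpace ℝ (Fin 3))) : ℕ :=
  sInf {n : ℕ | ∃ V : Finset (EuclideanSpace ℝ (Fin 3)), V.card = n ∧
    (∀ v ∈ V, ‖v‖ = 1) ∧
    ∀ p ∈ frontier K, ∃ v ∈ V, ∃ t : ℝ, 0 < t ∧ p + t • v ∈ interior K}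

set_option maxHeartbeats 1000000 in
theorem pE1a (p q : ℝ) (hp : 0 < p) (hpq : p ≤ q) (hq : q < 1) :
    0 < 2*q*((707/1000)*((1+q^2)*(1+p)^2)+(9/20)*((1-q)^2*(1+p^2))) - (17/10)*p*(1-q^2)*((1+q^2)*(1+p)^2) := by
  obtain ⟨t, rfl⟩ : ∃ t, q = p + t := ⟨q - p, by ring⟩
  obtain ⟨u, hu⟩ : ∃ u, u = 1 - p - t := ⟨_, rfl⟩
  have ht : 0 ≤ t := by linarith
  have hu0 : 0 < u := by linarith
  have key : 2*(p+t)*((707/1000)*((1+(p+t)^2)*(1+p)^2)+(9/20)*((1-(p+t))^2*(1+p^2))) - (17/10)*p*(1-(p+t)^2)*((1+(p+t)^2)*(1+p)^2) =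
      (1157/500)*p^0*t^1*u^6 + (3021/250)*p^0*t^2*u^5 + (3503/125)*p^0*t^3*u^4 + (4692/125)*p^0*t^4*u^3
       + (15297/500)*p^0*t^5*u^2 + (707/50)*p^0*t^6*u^1 + (707/250)*p^0*t^7*u^0 + (307/500)*p^1*t^0*u^6
       + (4199/250)*p^1*t^1*u^5 + (9089/125)*p^1*t^2*u^4 + (36813/250)*p^1*t^3*u^3 + (82967/500)*p^1*t^4*u^2
       + (12583/125)*p^1*t^5*u^1 + (6363/250)*p^1*t^6*u^0 + (164/125)*p^2*t^0*u^5 + (23333/500)*p^2*t^1*u^4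
       + (47499/250)*p^2*t^2*u^3 + (167297/500)*p^2*t^3*u^2 + (35763/125)*p^2*t^4*u^1 + (12019/125)*p^2*t^5*u^0
       + (139/500)*p^3*t^0*u^4 + (4079/50)*p^3*t^1*u^3 + (151959/500)*p^3*t^2*u^2 + (51722/125)*p^3*t^3*u^1
       + (4949/25)*p^3*t^4*u^0 + (13/10)*p^4*t^0*u^3 + (5741/50)*p^4*t^1*u^2 + (79811/250)*p^4*t^2*u^1
       + (12019/50)*p^4*t^3*u^0 + (2539/250)*p^5*t^0*u^2 + (15387/125)*p^5*t^1*u^1 + (43127/250)*p^5*t^2*u^0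
       + (2256/125)*p^6*t^0*u^1 + (8484/125)*p^6*t^1*u^0 + (1414/125)*p^7*t^0*u^0 := by
    subst hu; ring
  rw [key]
  positivity

set_option maxHeartbeats 1000000 in
theorem pE1b (p q : ℝ) (hp : 0 < p) (hpq : p ≤ q) (hq : q < 1) :
    0 < 2*q*((79/100)*((1+q^2)*(1+p)^2)+(19/100)*((1-q)^2*(1+p^2))) - (17/10)*p*(1-q^2)*((1+q^2)*(1+p)^2) := by
  obtain ⟨t, rfl⟩ : ∃ t, q = p + t := ⟨q - p, by ring⟩
  obtain ⟨u, hu⟩ : ∃ u, u = 1 - p - t := ⟨_, rfl⟩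
  have ht : 0 ≤ t := by linarith
  have hu0 : 0 < u := by linarith
  have key : 2*(p+t)*((79/100)*((1+(p+t)^2)*(1+p)^2)+(19/100)*((1-(p+t))^2*(1+p^2))) - (17/10)*p*(1-(p+t)^2)*((1+(p+t)^2)*(1+p)^2) =
      (49/25)*p^0*t^1*u^6 + (11)*p^0*t^2*u^5 + (689/25)*p^0*t^3*u^4 + (986/25)*p^0*t^4*u^3
       + (839/25)*p^0*t^5*u^2 + (79/5)*p^0*t^6*u^1 + (79/25)*p^0*t^7*u^0 + (13/50)*p^1*t^0*u^6
       + (374/25)*p^1*t^1*u^5 + (3649/50)*p^1*t^2*u^4 + (3963/25)*p^1*t^3*u^3 + (4627/25)*p^1*t^4*u^2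
       + (2832/25)*p^1*t^5*u^1 + (711/25)*p^1*t^6*u^0 + (14/25)*p^2*t^0*u^5 + (1206/25)*p^2*t^1*u^4
       + (212)*p^2*t^2*u^3 + (9554/25)*p^2*t^3*u^2 + (8132/25)*p^2*t^4*u^1 + (2686/25)*p^2*t^5*u^0
       + (28/25)*p^3*t^0*u^4 + (497/5)*p^3*t^1*u^3 + (1807/5)*p^3*t^2*u^2 + (11938/25)*p^3*t^3*u^1
       + (1106/5)*p^3*t^4*u^0 + (162/25)*p^4*t^0*u^3 + (3721/25)*p^4*t^1*u^2 + (9417/25)*p^4*t^2*u^1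
       + (1343/5)*p^4*t^3*u^0 + (452/25)*p^5*t^0*u^2 + (3758/25)*p^5*t^1*u^1 + (4819/25)*p^5*t^2*u^0
       + (584/25)*p^6*t^0*u^1 + (1896/25)*p^6*t^1*u^0 + (316/25)*p^7*t^0*u^0 := by
    subst hu; ring
  rw [key]
  positivity

set_option maxHeartbeats 1000000 in
theorem pE2b (p q : ℝ) (hp : 0 < p) (hpq : p ≤ q) (hq : q < 1) :
    0 < (17/5)*(p+q)*(1-p*q)*((79/100)*((1+q^2)*(1+p)^2)+(19/100)*((1-q)^2*(1+p^2))) - ((389/100)*p*(1-q^2)+2*q*(1-(289/100)*p^2))*((1+q^2)*(1+p)^2) := by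
  obtain ⟨t, rfl⟩ : ∃ t, q = p + t := ⟨q - p, by ring⟩
  obtain ⟨u, hu⟩ : ∃ u, u = 1 - p - t := ⟨_, rfl⟩
  have ht : 0 ≤ t := by linarith
  have hu0 : 0 < u := by linarith
  have key : (17/5)*(p+(p+t))*(1-p*(p+t))*((79/100)*((1+(p+t)^2)*(1+p)^2)+(19/100)*((1-(p+t))^2*(1+p^2))) - ((389/100)*p*(1-(p+t)^2)+2*(p+t)*(1-(289/100)*p^2))*((1+(p+t)^2)*(1+p)^2) =
      (333/250)*p^0*t^1*u^8 + (2341/250)*p^0*t^2*u^7 + (3698/125)*p^0*t^3*u^6 + (13863/250)*p^0*t^4*u^5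
       + (68)*p^0*t^5*u^4 + (14003/250)*p^0*t^6*u^3 + (3768/125)*p^0*t^7*u^2 + (2401/250)*p^0*t^8*u^1
       + (343/250)*p^0*t^9*u^0 + (387/500)*p^1*t^0*u^8 + (1793/125)*p^1*t^1*u^7 + (9211/125)*p^1*t^2*u^6
       + (24363/125)*p^1*t^3*u^5 + (158809/500)*p^1*t^4*u^4 + (42062/125)*p^1*t^5*u^3 + (56763/250)*p^1*t^6*u^2
       + (2212/25)*p^1*t^7*u^1 + (3773/250)*p^1*t^8*u^0 + (643/250)*p^2*t^0*u^7 + (11387/250)*p^2*t^1*u^6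
       + (28014/125)*p^2*t^2*u^5 + (70834/125)*p^2*t^3*u^4 + (212787/250)*p^2*t^4*u^3 + (191331/250)*p^2*t^5*u^2
       + (47327/125)*p^2*t^6*u^1 + (9863/125)*p^2*t^7*u^0 + (443/500)*p^3*t^0*u^6 + (21717/250)*p^3*t^1*u^5
       + (245209/500)*p^3*t^2*u^4 + (150644/125)*p^3*t^3*u^3 + (384867/250)*p^3*t^4*u^2
       + (124516/125)*p^3*t^5*u^1 + (32172/125)*p^3*t^6*u^0 + (276/125)*p^4*t^0*u^5 + (10687/50)*p^4*t^1*u^4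
       + (130554/125)*p^4*t^2*u^3 + (502911/250)*p^4*t^3*u^2 + (436121/250)*p^4*t^4*u^1
       + (28287/50)*p^4*t^5*u^0 + (5047/125)*p^5*t^0*u^4 + (66449/125)*p^5*t^1*u^3 + (209826/125)*p^5*t^2*u^2
       + (2030)*p^5*t^3*u^1 + (211533/250)*p^5*t^4*u^0 + (15206/125)*p^6*t^0*u^3 + (20121/25)*p^6*t^1*u^2
       + (186788/125)*p^6*t^2*u^1 + (105364/125)*p^6*t^3*u^0 + (20853/125)*p^7*t^0*u^2
       + (78134/125)*p^7*t^1*u^1 + (66563/125)*p^7*t^2*u^0 + (14084/125)*p^8*t^0*u^1 + (24052/125)*p^8*t^1*u^0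
       + (756/25)*p^9*t^0*u^0 := by
    subst hu; ring
  rw [key]
  positivity

set_option maxHeartbeats 1000000 in
theorem pE2a (p q : ℝ) (hp : 0 < p) (hpq : p ≤ q) (hq : q < 1) :
    0 < (17/5)*(p+q)*(1-p*q)*((707/1000)*((1+q^2)*(1+p)^2)+(9/20)*((1-q)^2*(1+p^2))) - ((389/100)*p*(1-q^2)+2*q*(1-(289/100)*p^2))*((1+q^2)*(1+p)^2) := by
  obtain ⟨t, rfl⟩ : ∃ t, q = p + t := ⟨q - p, by ring⟩
  obtain ⟨u, hu⟩ : ∃ u, u = 1 - p - t := ⟨_, rfl⟩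
  have ht : 0 ≤ t := by linarith
  have hu0 : 0 < u := by linarith
  have key : (17/5)*(p+(p+t))*(1-p*(p+t))*((707/1000)*((1+(p+t)^2)*(1+p)^2)+(9/20)*((1-(p+t))^2*(1+p^2))) - ((389/100)*p*(1-(p+t)^2)+2*(p+t)*(1-(289/100)*p^2))*((1+(p+t)^2)*(1+p)^2) =
      (9669/5000)*p^0*t^1*u^6 + (21357/2500)*p^0*t^2*u^5 + (19551/1250)*p^0*t^3*u^4 + (9882/625)*p^0*t^4*u^3
       + (50049/5000)*p^0*t^5*u^2 + (2019/500)*p^0*t^6*u^1 + (2019/2500)*p^0*t^7*u^0 + (1236/625)*p^1*t^0*u^6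
       + (1887/125)*p^1*t^1*u^5 + (181587/5000)*p^1*t^2*u^4 + (113661/2500)*p^1*t^3*u^3
       + (39741/1000)*p^1*t^4*u^2 + (3093/125)*p^1*t^5*u^1 + (18171/2500)*p^1*t^6*u^0 + (2238/625)*p^2*t^0*u^5
       + (9144/625)*p^2*t^1*u^4 + (13461/500)*p^2*t^2*u^3 + (27801/500)*p^2*t^3*u^2 + (184851/2500)*p^2*t^4*u^1
       + (85527/2500)*p^2*t^5*u^0 + (-7503/1250)*p^3*t^0*u^4 + (-9648/625)*p^3*t^1*u^3
       + (19899/500)*p^3*t^2*u^2 + (187683/1250)*p^3*t^3*u^1 + (259497/2500)*p^3*t^4*u^0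
       + (-7941/625)*p^4*t^0*u^3 + (29439/1250)*p^4*t^1*u^2 + (125262/625)*p^4*t^2*u^1
       + (246177/1250)*p^4*t^3*u^0 + (1203/125)*p^5*t^0*u^2 + (91668/625)*p^5*t^1*u^1 + (136296/625)*p^5*t^2*u^0
       + (26976/625)*p^6*t^0*u^1 + (79638/625)*p^6*t^1*u^0 + (756/25)*p^7*t^0*u^0 := by
    subst hu; ring
  rw [key]
  have hP : ∀ i j k : ℕ, 0 ≤ p^i*t^j*u^k := fun i j k => by positivity
  have hS : ∀ i j k : ℕ, 0 ≤ p^i*t^j*u^k*(u-2*p)^2 := fun i j k => by positivity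
  have h0 : 0 < p*u^6 := by positivity
  linarith [hS 1 0 4, hS 2 0 3, hS 3 0 2, hS 4 0 1, hS 5 0 0, hS 1 1 3, hS 2 1 2, hS 3 1 1, hS 4 1 0, h0,
    hP 0 1 6, hP 0 2 5, hP 0 3 4, hP 0 4 3, hP 0 5 2, hP 0 6 1, hP 0 7 0, hP 1 0 6, hP 1 1 5, hP 1 2 4, hP 1 3 3, hP 1 4 2, hP 1 5 1, hP 1 6 0, hP 2 0 5, hP 2 1 4, hP 2 2 3, hP 2 3 2, hP 2 4 1, hP 2 5 0, hP 3 0 4, hP 3 1 3, hP 3 2 2, hP 3 3 1, hP 3 4 0, hP 4 0 3, hP 4 1 2, hP 4 2 1, hP 4 3 0, hP 5 0 2, hP 5 1 1, hP 5 2 0, hP 6 0 1, hP 6 1 0, hP 7 0 0]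

theorem cosC (B : ℝ) (h0 : 0 ≤ B) (h1 : B ≤ 1) :
    707/1000 + 75/160 * B ≤ cos (π/4*(1-B)) ∨ 79/100 + 19*25/2400 * B ≤ cos (π/4*(1-B)) := by
  have hc := strictConcaveOn_cos_Icc.concaveOn
  have hpi := Real.pi_pos
  have s2 : (1.4142:ℝ) ≤ √2 := Real.le_sqrt_of_sq_le (by norm_num)
  have s3 : (1.732:ℝ) ≤ √3 := Real.le_sqrt_of_sq_le (by norm_num)
  have m4 : π/4 ∈ Icc (-(π/2)) (π/2) := ⟨by linarith, by linarith⟩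
  have m6 : π/6 ∈ Icc (-(π/2)) (π/2) := ⟨by linarith, by linarith⟩
  have m0 : (0:ℝ) ∈ Icc (-(π/2)) (π/2) := ⟨by linarith, by linarith⟩
  rcases le_total B (1/3) with h | h
  · left
    have := hc.2 m4 m6 (show 0 ≤ 1-3*B by linarith) (show 0 ≤ 3*B by linarith) (by ring)
    simp only [smul_eq_mul, Real.cos_pi_div_four, Real.cos_pi_div_six] at this
    rw [show π/4*(1-B) = (1-3*B)*(π/4) + 3*B*(π/6) by ring]
    nlinarith
  · right
    have := hc.2 m6 m0 (show 0 ≤ 3/2*(1-B) by linarith) (show 0 ≤ 1-3/2*(1-B) by linarith) (by ring)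
    simp only [smul_eq_mul, Real.cos_zero, Real.cos_pi_div_six] at this
    rw [show π/4*(1-B) = 3/2*(1-B)*(π/6) + (1-3/2*(1-B))*0 by ring]
    nlinarith

theorem azimuth {ι : Type*} (S : Finset ι) (φ B : ι → ℝ) (hB : ∀ i ∈ S, 0 ≤ B i)
    (hs : ∑ i ∈ S, B i < 1) :
    ∃ β : ℝ, ∀ i ∈ S, ∃ k : ℤ, |β + k * (π/2) - φ i| ≤ π/4*(1 - B i) := by
  have hpi := Real.pi_pos
  haveI : Fact (0 < π/2) := ⟨by positivity⟩
  by_contra hcon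
  push Not at hcon
  have hB1 : ∀ i ∈ S, B i ≤ 1 := fun i hi =>
    (Finset.single_le_sum (f := B) (fun j hj => hB j hj) hi).trans hs.le
  have cover : (univ : Set (AddCircle (π/2))) ⊆
      ⋃ i ∈ S, (closedBall ((φ i : ℝ) : AddCircle (π/2)) (π/4*(1 - B i)))ᶜ := by
    intro b _
    induction b using QuotientAddGroup.induction_on with
    | H b =>
    obtain ⟨i, hi, hk⟩ := hcon b
    simp only [mem_iUnion, mem_compl_iff, mem_closedBall, not_le]
    refine ⟨i, hi, ?_⟩
    rw [dist_eq_norm]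
    have : ((b : AddCircle (π/2)) - (φ i : ℝ)) = ((b - φ i : ℝ) : AddCircle (π/2)) := by
      norm_cast
    rw [show (QuotientAddGroup.mk b : AddCircle (π/2)) = (b : AddCircle (π/2)) from rfl, this,
      AddCircle.norm_eq]
    have := hk (-round ((π/2)⁻¹ * (b - φ i)))
    convert this using 2
    push_cast; ring
  have h1 := MeasureTheory.measure_mono (μ := MeasureTheory.volume) cover
  have h2 := h1.trans (MeasureTheory.measure_biUnion_finset_le S _)
  have h3 : ∀ i ∈ S, MeasureTheory.volume ((closedBall ((φ i : ℝ) : AddCircle (π/2)) (π/4*(1 - B i)))ᶜ)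
      = ENNReal.ofReal (π/2 * B i) := by
    intro i hi
    rw [MeasureTheory.measure_compl measurableSet_closedBall (MeasureTheory.measure_ne_top _ _),
      AddCircle.volume_closedBall, AddCircle.measure_univ, min_eq_right, ← ENNReal.ofReal_sub]
    · congr 1; ring
    · have := hB1 i hi; nlinarith
    · have := hB i hi; nlinarith
  rw [Finset.sum_congr rfl h3, AddCircle.measure_univ, ← ENNReal.ofReal_sum_of_nonneg,
    ENNReal.ofReal_le_ofReal_iff, ← Finset.mul_sum] at h2
  · nlinarith
  · exact Finset.sum_nonneg fun i hi => mul_nonneg (by positivity) (hB i hi)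
  · exact fun i hi => mul_nonneg (by positivity) (hB i hi)

/-- The two endpoint inequalities. -/
theorem endpoints (p q C : ℝ) (hp : 0 < p) (hpq : p ≤ q) (hq : q < 1)
    (hC : 707/1000 + 9/20 * ((1-q)^2*(1+p^2)/((1+q^2)*(1+p)^2)) ≤ C ∨
      79/100 + 19/100 * ((1-q)^2*(1+p^2)/((1+q^2)*(1+p)^2)) ≤ C) :
    (17/10)*p*(1-q^2) < 2*q*C ∧
    (389/100)*p*(1-q^2)+2*q*(1-(289/100)*p^2) < (17/5)*(p+q)*(1-p*q)*C := by
  have hq0 : 0 < q := hp.trans_le hpq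
  have hD : 0 < (1+q^2)*(1+p)^2 := by positivity
  have h1 : 0 < 1 - p*q := by nlinarith
  have main : ∀ a b : ℝ, a + b * ((1-q)^2*(1+p^2)/((1+q^2)*(1+p)^2)) ≤ C →
      a*((1+q^2)*(1+p)^2) + b*((1-q)^2*(1+p^2)) ≤ C*((1+q^2)*(1+p)^2) := by
    intro a b h
    have := mul_le_mul_of_nonneg_right h hD.le
    have e : (a + b * ((1-q)^2*(1+p^2)/((1+q^2)*(1+p)^2)))*((1+q^2)*(1+p)^2) =
      a*((1+q^2)*(1+p)^2) + b*((1-q)^2*(1+p^2)) := by field_simp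
    linarith
  have c1 : 0 ≤ 2*q := by positivity
  have c2 : 0 ≤ (17/5)*(p+q)*(1-p*q) := by positivity
  rcases hC with h | h
  · have := main _ _ h
    have e1 := mul_le_mul_of_nonneg_left this c1
    have e2 := mul_le_mul_of_nonneg_left this c2
    have f1 := pE1a p q hp hpq hq
    have f2 := pE2a p q hp hpq hq
    constructor
    · refine lt_of_mul_lt_mul_right (a := (1+q^2)*(1+p)^2) ?_ hD.le
      linarith
    · refine lt_of_mul_lt_mul_right (a := (1+q^2)*(1+p)^2) ?_ hD.le
      linarith
  · have := main _ _ h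
    have e1 := mul_le_mul_of_nonneg_left this c1
    have e2 := mul_le_mul_of_nonneg_left this c2
    have f1 := pE1b p q hp hpq hq
    have f2 := pE2b p q hp hpq hq
    constructor
    · refine lt_of_mul_lt_mul_right (a := (1+q^2)*(1+p)^2) ?_ hD.le
      linarith
    · refine lt_of_mul_lt_mul_right (a := (1+q^2)*(1+p)^2) ?_ hD.le
      linarith

set_option maxHeartbeats 2000000 in
/-- Key inequality. `N`, `A` belong to the small cap, `a`, `A₁` to the large one. -/
theorem keyIneq (p q C a A₁ N A z ρ : ℝ) (hp : 0 < p) (hpq : p ≤ q) (hq : q < 1)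
    (hC : 707/1000 + 9/20 * ((1-q)^2*(1+p^2)/((1+q^2)*(1+p)^2)) ≤ C ∨
      79/100 + 19/100 * ((1-q)^2*(1+p^2)/((1+q^2)*(1+p)^2)) ≤ C)
    (ha : a = (1+p^2)/(2*p)) (hA₁ : A₁ = (1-p^2)/(2*p))
    (hN : N = (1+q^2)/(2*q)) (hA : A = (1-q^2)/(2*q))
    (hρ : 0 ≤ ρ) (hz : z^2 + ρ^2 = N^2) (hz0 : A₁*A - 1 ≤ z*a) (hz1 : z ≤ A) :
    A*(1+(17/10*p)^2) < 2*(17/10*p)*ρ*C + (1-(17/10*p)^2)*z := by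
  have hq0 : 0 < q := hp.trans_le hpq
  obtain ⟨E1, E2⟩ := endpoints p q C hp hpq hq hC
  have hC0 : 0 < C := by
    have : 0 ≤ ((1-q)^2*(1+p^2)/((1+q^2)*(1+p)^2)) := by positivity
    rcases hC with h | h <;> linarith
  have ha0 : 0 < a := by rw [ha]; positivity
  have hA0 : 0 < A := by rw [hA]; apply div_pos <;> nlinarith
  have hA10 : 0 < A₁ := by rw [hA₁]; apply div_pos <;> nlinarith
  have haA : a^2 = 1 + A₁^2 := by rw [ha, hA₁]; field_simp; ring
  have hNA : N^2 = 1 + A^2 := by rw [hN, hA]; field_simp; ring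
  obtain ⟨z0, hz0d⟩ : ∃ z0, z0 = (A₁*A-1)/a := ⟨_, rfl⟩
  obtain ⟨r0, hr0d⟩ : ∃ r0, r0 = (A₁+A)/a := ⟨_, rfl⟩
  have hz0r : z0^2 + r0^2 = N^2 := by
    rw [hz0d, hr0d, hNA, div_pow, div_pow, ← add_div, haA, div_eq_iff (by positivity)]; ring
  have hr0 : 0 < r0 := by rw [hr0d]; positivity
  have hz0z : z0 ≤ z := by rw [hz0d, div_le_iff₀ ha0]; exact hz0
  have F1 : A*(1+(17/10*p)^2) < 2*(17/10*p)*1*C + (1-(17/10*p)^2)*A := by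
    have : A * (2*q) = 1 - q^2 := by rw [hA]; field_simp
    have h : A*(17/10*p) < C := by
      refine lt_of_mul_lt_mul_right (a := 2*q) ?_ (by positivity)
      calc A*(17/10*p)*(2*q) = (17/10)*p*(A*(2*q)) := by ring
        _ = (17/10)*p*(1-q^2) := by rw [this]
        _ < 2*q*C := E1
        _ = C*(2*q) := by ring
    have := mul_pos hp (sub_pos.2 h)
    linarith
  have F2 : A*(1+(17/10*p)^2) < 2*(17/10*p)*r0*C + (1-(17/10*p)^2)*z0 := by
    have e : 2*(17/10*p)*r0*C + (1-(17/10*p)^2)*z0 - A*(1+(17/10*p)^2)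
       = p*((17/5)*(p+q)*(1-p*q)*C - ((389/100)*p*(1-q^2)+2*q*(1-(289/100)*p^2)))/(q*(1+p^2)) := by
      rw [hr0d, hz0d, ha, hA, hA₁]; field_simp; ring
    have : 0 < p*((17/5)*(p+q)*(1-p*q)*C - ((389/100)*p*(1-q^2)+2*q*(1-(289/100)*p^2)))/(q*(1+p^2)) := by
      apply div_pos (mul_pos hp (by linarith)) (by positivity)
    linarith
  rcases eq_or_lt_of_le (hz0z.trans hz1) with h | h
  · have hzA : z = A := le_antisymm hz1 (h ▸ hz0z)
    have : ρ = 1 := by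
      have : ρ^2 = 1 := by rw [hzA] at hz; linarith
      nlinarith
    rw [hzA, this]; exact F1
  · obtain ⟨μ, hμ⟩ : ∃ μ, μ = (z - z0)/(A - z0) := ⟨_, rfl⟩
    have hAz : 0 < A - z0 := by linarith
    have hμ0 : 0 ≤ μ := by rw [hμ]; apply div_nonneg <;> linarith
    have hμ1 : μ ≤ 1 := by rw [hμ, div_le_one hAz]; linarith
    have hzμ : z = (1-μ)*z0 + μ*A := by
      have : μ*(A-z0) = z - z0 := by rw [hμ]; field_simp
      linarith
    have hρμ : (1-μ)*r0 + μ*1 ≤ ρ := by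
      refine le_of_sq_le_sq ?_ hρ
      have : 0 ≤ μ*(1-μ)*((z0-A)^2+(r0-1)^2) := by
        have : 0 ≤ 1 - μ := by linarith
        positivity
      have e : z^2 + ((1-μ)*r0 + μ*1)^2 = (1-μ)*(z0^2+r0^2) + μ*(A^2+1) - μ*(1-μ)*((z0-A)^2+(r0-1)^2) := by
        rw [hzμ]; ring
      rw [hz0r, show A^2 + 1 = N^2 by linarith] at e
      linarith
    have G : 2*(17/10*p)*C*((1-μ)*r0 + μ*1) ≤ 2*(17/10*p)*C*ρ :=
      mul_le_mul_of_nonneg_left hρμ (by positivity)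
    have H : 0 < (1-μ)*(2*(17/10*p)*r0*C + (1-(17/10*p)^2)*z0 - A*(1+(17/10*p)^2)) +
        μ*(2*(17/10*p)*1*C + (1-(17/10*p)^2)*A - A*(1+(17/10*p)^2)) := by
      rcases eq_or_lt_of_le hμ0 with h' | h'
      · rw [← h']; linarith
      · have : 0 ≤ 1 - μ := by linarith
        have a1 := mul_nonneg this (sub_pos.2 F2).le
        have a2 := mul_pos h' (sub_pos.2 F1)
        linarith
    have I : (1-(17/10*p)^2)*z = (1-(17/10*p)^2)*((1-μ)*z0 + μ*A) := by rw [hzμ]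
    linarith

open MeasureTheory in
theorem disc_vol (c : ℝ) (hc : 0 ≤ c) :
    (volume {v : Fin 2 → ℝ | v 0 ^ 2 + v 1 ^ 2 < c}) = ENNReal.ofReal (π * c) := by
  have h := (PiLp.volume_preserving_ofLp (Fin 2)).measure_preimage
    (s := {v : Fin 2 → ℝ | v 0 ^ 2 + v 1 ^ 2 < c})
    (measurableSet_lt (by fun_prop) (by fun_prop)).nullMeasurableSet
  rw [← h]
  have : (WithLp.ofLp ⁻¹' {v : Fin 2 → ℝ | v 0 ^ 2 + v 1 ^ 2 < c} : Set (EuclideanSpace ℝ (Fin 2)))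
      = ball 0 (√c) := by
    ext x
    simp only [mem_preimage, mem_ofPred_eq, mem_ball, dist_zero_right, EuclideanSpace.norm_eq,
      Fin.sum_univ_two, Real.norm_eq_abs, sq_abs]
    rw [Real.sqrt_lt_sqrt_iff (by positivity)]
  rw [this, EuclideanSpace.volume_ball_fin_two, ← ENNReal.ofReal_pow (by positivity), Real.sq_sqrt hc,
    mul_comm, ENNReal.ofReal_mul pi_pos.le]
  try rfl

theorem openM (a : ℝ) :
    MeasurableSet {x : ℝ × (Fin 2 → ℝ) | x.1^2 + (x.2 0 ^ 2 + x.2 1 ^ 2) < 1 ∧ 0 < x.1 ∧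
        x.1^2 + (x.2 0 ^ 2 + x.2 1 ^ 2) < a^2*x.1^2} := by
  refine IsOpen.measurableSet (IsOpen.and ?_ (IsOpen.and ?_ ?_)) <;>
      exact isOpen_lt (by fun_prop) (by fun_prop)

open MeasureTheory in
theorem sector_vol' (a : ℝ) (ha : 1 < a) :
    ENNReal.ofReal (2*π/3*(1-1/a)) ≤
      volume {x : ℝ × (Fin 2 → ℝ) | x.1^2 + (x.2 0 ^ 2 + x.2 1 ^ 2) < 1 ∧ 0 < x.1 ∧
        x.1^2 + (x.2 0 ^ 2 + x.2 1 ^ 2) < a^2*x.1^2} := by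
  have ha0 : 0 < a := by linarith
  have hm : MeasurableSet {x : ℝ × (Fin 2 → ℝ) | x.1^2 + (x.2 0 ^ 2 + x.2 1 ^ 2) < 1 ∧ 0 < x.1 ∧
        x.1^2 + (x.2 0 ^ 2 + x.2 1 ^ 2) < a^2*x.1^2} :=
    openM a
  rw [Measure.volume_eq_prod, Measure.prod_apply hm]
  have hi : 1/a < 1 := by rw [div_lt_one ha0]; exact ha
  have hi0 : 0 < 1/a := by positivity
  have I1 : ∫⁻ z in Ioc 0 (1/a), ENNReal.ofReal (π*((a^2-1)*z^2)) =
      ENNReal.ofReal (π*((a^2-1)*((1/a)^3/3))) := by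
    rw [← ofReal_integral_eq_lintegral_ofReal, ← intervalIntegral.integral_of_le hi0.le]
    · congr 1
      simp only [intervalIntegral.integral_const_mul, integral_pow]
      norm_num
    · exact (Continuous.integrableOn_Ioc (by fun_prop))
    · exact Filter.Eventually.of_forall fun z => by
        have : 0 ≤ a^2 - 1 := by nlinarith
        simp only [Pi.zero_apply]; positivity
  have I2 : ∫⁻ z in Ioc (1/a) 1, ENNReal.ofReal (π*(1-z^2)) =
      ENNReal.ofReal (π*((1-1/a) - (1-(1/a)^3)/3)) := by
    rw [← ofReal_integral_eq_lintegral_ofReal, ← intervalIntegral.integral_of_le hi.le]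
    · congr 1
      rw [intervalIntegral.integral_const_mul, intervalIntegral.integral_sub
        (by simp) (Continuous.intervalIntegrable (by fun_prop) _ _), integral_pow]
      simp only [intervalIntegral.integral_const, smul_eq_mul]
      norm_num
    · exact (Continuous.integrableOn_Ioc (by fun_prop))
    · rw [Filter.EventuallyLE]
      refine (ae_restrict_iff' measurableSet_Ioc).2 (Filter.Eventually.of_forall fun z hz => ?_)
      have : 0 ≤ 1 - z^2 := by nlinarith [hz.1, hz.2]
      simp only [Pi.zero_apply]; positivity
  have hd : Disjoint (Ioc 0 (1/a)) (Ioc (1/a) 1) := by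
    rw [Set.disjoint_left]; intro z h1 h2; exact absurd h1.2 (not_le.2 h2.1)
  calc ENNReal.ofReal (2*π/3*(1-1/a))
      = ENNReal.ofReal (π*((a^2-1)*((1/a)^3/3))) + ENNReal.ofReal (π*((1-1/a) - (1-(1/a)^3)/3)) := by
        rw [← ENNReal.ofReal_add]
        · congr 1; field_simp; ring
        · have : 0 ≤ a^2 - 1 := by nlinarith
          positivity
        · apply mul_nonneg pi_pos.le
          have : (1-1/a) - (1-(1/a)^3)/3 = (1-1/a)^2*(2+1/a)/3 := by ring
          rw [this]; positivity
    _ = (∫⁻ z in Ioc 0 (1/a), ENNReal.ofReal (π*((a^2-1)*z^2))) +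
         ∫⁻ z in Ioc (1/a) 1, ENNReal.ofReal (π*(1-z^2)) := by rw [I1, I2]
    _ ≤ _ := by
      refine le_trans ?_ (setLIntegral_le_lintegral (Ioc 0 (1/a) ∪ Ioc (1/a) 1) _)
      rw [lintegral_union measurableSet_Ioc hd]
      refine add_le_add (setLIntegral_mono' measurableSet_Ioc fun z hz => ?_)
        (setLIntegral_mono' measurableSet_Ioc fun z hz => ?_)
      · have h0 : 0 ≤ a^2 - 1 := by nlinarith
        rw [← disc_vol _ (by positivity)]
        refine measure_mono fun v hv => ?_
        simp only [mem_ofPred_eq, mem_preimage] at hv ⊢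
        have : z * a ≤ 1 := by have := hz.2; rwa [le_div_iff₀ ha0] at this
        have h2 : (z*a)^2 ≤ 1 := by
          have := mul_pos hz.1 ha0
          nlinarith
        refine ⟨by nlinarith, hz.1, by nlinarith⟩
      · rw [← disc_vol _ (by nlinarith [hz.1, hz.2])]
        refine measure_mono fun v hv => ?_
        simp only [mem_ofPred_eq, mem_preimage] at hv ⊢
        have : 1 < z * a := by have := hz.1; rwa [div_lt_iff₀ ha0] at this
        refine ⟨by linarith, hi0.trans hz.1, by nlinarith⟩

theorem exists_basis (c : EuclideanSpace ℝ (Fin 3)) (hc : ‖c‖ = 1) :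
    ∃ b : OrthonormalBasis (Fin 3) ℝ (EuclideanSpace ℝ (Fin 3)), b 0 = c := by
  have := Orthonormal.exists_orthonormalBasis_extension_of_card_eq (𝕜 := ℝ)
    (E := EuclideanSpace ℝ (Fin 3)) (ι := Fin 3) (by simp) (v := fun _ => c) (s := {0}) (by
      rw [orthonormal_iff_ite]
      rintro ⟨i, hi⟩ ⟨j, hj⟩
      simp only [mem_singleton_iff] at hi hj
      subst hi; subst hj
      simp [hc])
  obtain ⟨b, hb⟩ := this
  exact ⟨b, hb 0 rfl⟩

open MeasureTheory in
theorem sector_vol (y : EuclideanSpace ℝ (Fin 3)) (hy : 1 < ‖y‖) :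
    ENNReal.ofReal (2*π/3*(1-1/‖y‖)) ≤
      volume {x : EuclideanSpace ℝ (Fin 3) | ‖x‖ < 1 ∧ ‖x‖ < inner ℝ x y} := by
  have hy0 : 0 < ‖y‖ := by linarith
  obtain ⟨b, hb⟩ := exists_basis (‖y‖⁻¹ • y) (by rw [norm_smul, norm_inv, norm_norm]; field_simp)
  have hyb : y = ‖y‖ • b 0 := by rw [hb, smul_smul, mul_inv_cancel₀ hy0.ne', one_smul]
  refine (sector_vol' ‖y‖ hy).trans ?_
  have mp := ((volume_preserving_piFinSuccAbove (fun _ : Fin 3 => ℝ) 0).comp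
    (PiLp.volume_preserving_ofLp (Fin 3))).comp b.measurePreserving_repr
  rw [← mp.measure_preimage]
  · refine measure_mono fun x hx => ?_
    simp only [mem_preimage, mem_ofPred_eq, Function.comp] at hx ⊢
    simp only [MeasurableEquiv.piFinSuccAbove, Fin.insertNthEquiv] at hx
    change (b.repr x).ofLp 0^2 + ((b.repr x).ofLp 1 ^2 + (b.repr x).ofLp 2 ^2) < 1 ∧
      0 < (b.repr x).ofLp 0 ∧ (b.repr x).ofLp 0^2 + ((b.repr x).ofLp 1 ^2 + (b.repr x).ofLp 2 ^2)
        < ‖y‖^2*(b.repr x).ofLp 0^2 at hx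
    have hn : ‖x‖^2 = (b.repr x).ofLp 0^2 + ((b.repr x).ofLp 1 ^2 + (b.repr x).ofLp 2 ^2) := by
      rw [← b.repr.norm_map, EuclideanSpace.norm_sq_eq, Fin.sum_univ_three]
      simp [add_assoc]
    have hin : inner ℝ x y = ‖y‖ * (b.repr x).ofLp 0 := by
      conv_lhs => rw [hyb]
      rw [inner_smul_right, b.repr_apply_apply, real_inner_comm]
    rw [← hn] at hx
    obtain ⟨h1, h2, h3⟩ := hx
    refine ⟨by nlinarith [norm_nonneg x], ?_⟩
    rw [hin]
    refine lt_of_pow_lt_pow_left₀ 2 (by positivity) ?_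
    rw [mul_pow]; exact h3
  · exact MeasurableSet.nullMeasurableSet (openM _)

open MeasureTheory in
theorem area_bound {ι : Type*} (S : Finset ι) (x : ι → EuclideanSpace ℝ (Fin 3))
    (hx : ∀ i ∈ S, 1 < ‖x i‖)
    (hd : ∀ i ∈ S, ∀ j ∈ S, i ≠ j → ∃ l : ℝ, 0 < l ∧ l < 1 ∧ ‖(1-l) • x i + l • x j‖ ≤ 1) :
    ∑ i ∈ S, (1 - 1/‖x i‖) ≤ 2 := by
  have hdis : (S : Set ι).PairwiseDisjoint
      (fun i => {u : EuclideanSpace ℝ (Fin 3) | ‖u‖ < 1 ∧ ‖u‖ < inner ℝ u (x i)}) := by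
    intro i hi j hj hij
    rw [Function.onFun, Set.disjoint_left]
    rintro u ⟨_, h1⟩ ⟨_, h2⟩
    obtain ⟨l, l0, l1, hl⟩ := hd i hi j hj hij
    have h3 := real_inner_le_norm u ((1-l) • x i + l • x j)
    rw [inner_add_right, inner_smul_right, inner_smul_right] at h3
    have h4 : ‖u‖ * ‖(1-l) • x i + l • x j‖ ≤ ‖u‖ := by nlinarith [norm_nonneg u]
    nlinarith
  have h := measure_biUnion_finset (μ := volume) hdis (fun i _ => by
    refine IsOpen.measurableSet (IsOpen.and ?_ ?_) <;>
      exact isOpen_lt (by fun_prop) (by fun_prop))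
  have h1 : volume (⋃ i ∈ S, {u : EuclideanSpace ℝ (Fin 3) | ‖u‖ < 1 ∧ ‖u‖ < inner ℝ u (x i)})
      ≤ volume (ball (0 : EuclideanSpace ℝ (Fin 3)) 1) := by
    refine measure_mono fun u hu => ?_
    simp only [mem_iUnion] at hu
    obtain ⟨i, _, hu⟩ := hu
    simpa using hu.1
  rw [h, EuclideanSpace.volume_ball_fin_three] at h1
  have h2 := (Finset.sum_le_sum fun i hi => sector_vol (x i) (hx i hi)).trans h1
  rw [← ENNReal.ofReal_sum_of_nonneg, ENNReal.ofReal_one, one_pow, one_mul,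
    ENNReal.ofReal_le_ofReal_iff (by positivity), ← Finset.mul_sum] at h2
  · have := pi_pos
    nlinarith
  · intro i hi
    have := hx i hi
    have : 1/‖x i‖ ≤ 1 := by rw [div_le_one (by linarith)]; linarith
    have := pi_pos
    apply mul_nonneg <;> [positivity; linarith]

theorem hull_mem (y p : EuclideanSpace ℝ (Fin 3)) :
    p ∈ convexHull ℝ ({y} ∪ closedBall 0 1) ↔
      ∃ s : ℝ, 0 ≤ s ∧ s ≤ 1 ∧ ∃ b : EuclideanSpace ℝ (Fin 3), ‖b‖ ≤ 1 ∧ p = (1-s) • y + s • b := by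
  rw [singleton_union, convexHull_insert (by simp), (convex_closedBall _ _).convexHull_eq,
    convexJoin_singleton_left]
  simp only [mem_iUnion, mem_closedBall, dist_zero_right, segment_eq_image]
  constructor
  · rintro ⟨b, hb, s, hs, rfl⟩
    exact ⟨s, hs.1, hs.2, b, hb, rfl⟩
  · rintro ⟨s, h0, h1, b, hb, rfl⟩
    exact ⟨b, hb, s, ⟨h0, h1⟩, rfl⟩

theorem hull_closed (y : EuclideanSpace ℝ (Fin 3)) :
    IsClosed (convexHull ℝ ({y} ∪ closedBall (0 : EuclideanSpace ℝ (Fin 3)) 1)) := by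
  have h : convexHull ℝ ({y} ∪ closedBall (0 : EuclideanSpace ℝ (Fin 3)) 1) =
      (fun r : ℝ × EuclideanSpace ℝ (Fin 3) => (1 - r.1) • y + r.1 • r.2) ''
        (Icc 0 1 ×ˢ closedBall 0 1) := by
    ext p
    rw [hull_mem]
    constructor
    · rintro ⟨s, h0, h1, b, hb, rfl⟩
      exact ⟨(s, b), ⟨⟨h0, h1⟩, by simpa using hb⟩, rfl⟩
    · rintro ⟨⟨s, b⟩, ⟨⟨h0, h1⟩, hb⟩, rfl⟩
      exact ⟨s, h0, h1, b, by simpa using hb, rfl⟩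
  rw [h]
  exact ((isCompact_Icc.prod (isCompact_closedBall _ _)).image (by fun_prop)).isClosed

/-- Sufficient condition for illumination. -/
theorem illum_of (K : Set (EuclideanSpace ℝ (Fin 3))) {m : ℕ} (S : Finset (Fin m))
    (x : Fin m → EuclideanSpace ℝ (Fin 3)) (hx : ∀ i, 1 < ‖x i‖)
    (hK : K = ⋃ i ∈ S, convexHull ℝ ({x i} ∪ closedBall 0 1)) (hS : S.Nonempty)
    (W : Finset (EuclideanSpace ℝ (Fin 3))) (hW : W.card ≤ 6) (hW1 : ∀ w ∈ W, ‖w‖ = 1)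
    (hc : ∀ i ∈ S, ∃ w ∈ W, √(‖x i‖^2 - 1) < inner ℝ w (x i))
    (hu : ∀ u : EuclideanSpace ℝ (Fin 3), u ≠ 0 → ∃ w ∈ W, 0 < inner ℝ w u) :
    illumNum K ≤ 6 := by
  classical
  have hball : ball (0 : EuclideanSpace ℝ (Fin 3)) 1 ⊆ interior K := by
    apply interior_maximal _ isOpen_ball
    obtain ⟨i, hi⟩ := hS
    rw [hK]
    intro y hy
    simp only [mem_iUnion]
    refine ⟨i, hi, subset_convexHull ℝ _ (Or.inr (ball_subset_closedBall hy))⟩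
  have hcl : IsClosed K := by
    rw [hK]
    refine S.finite_toSet.isClosed_biUnion fun i _ => ?_
    exact hull_closed _
  refine le_trans (Nat.sInf_le ⟨W.image (fun w => -w), rfl, ?_, ?_⟩)
    (Finset.card_image_le.trans hW)
  · intro v hv
    obtain ⟨w, hw, rfl⟩ := Finset.mem_image.1 hv
    rw [norm_neg]; exact hW1 w hw
  · intro p hp
    have hpK : p ∈ K := hcl.frontier_subset hp
    have hpi : p ∉ interior K := hp.2
    rw [hK] at hpK
    simp only [mem_iUnion] at hpK
    obtain ⟨i, hi, hpi'⟩ := hpK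
    obtain ⟨s, s0, s1, b, hb, rfl⟩ := (hull_mem _ _).1 hpi'
    rcases eq_or_lt_of_le s1 with rfl | s1
    · simp only [sub_self, zero_smul, one_smul, zero_add] at hpi ⊢
      have hb1 : ‖b‖ = 1 := by
        refine le_antisymm hb (not_lt.1 fun h => hpi (hball (by simpa using h)))
      obtain ⟨w, hw, hwb⟩ := hu b (by rintro rfl; simp at hb1)
      refine ⟨-w, Finset.mem_image_of_mem _ hw, inner ℝ w b, hwb, hball ?_⟩
      have e : ‖b + (inner ℝ w b) • (-w)‖^2 < 1 := by
        rw [norm_add_sq_real, norm_smul, norm_neg, hW1 w hw, hb1, inner_smul_right, inner_neg_right,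
          real_inner_comm w b, Real.norm_eq_abs, mul_one, sq_abs]
        nlinarith
      rw [mem_ball, dist_zero_right]
      nlinarith [norm_nonneg (b + (inner ℝ w b) • (-w))]
    · obtain ⟨w, hw, hwx⟩ := hc i hi
      have hA : √(‖x i‖^2 - 1)^2 = ‖x i‖^2 - 1 := Real.sq_sqrt (by nlinarith [hx i])
      have hA0 := Real.sqrt_nonneg (‖x i‖^2 - 1)
      have hin : 0 < inner ℝ w (x i) := lt_of_le_of_lt hA0 hwx
      have e : ‖x i + (inner ℝ w (x i)) • (-w)‖^2 < 1 := by
        rw [norm_add_sq_real, norm_smul, norm_neg, hW1 w hw, inner_smul_right, inner_neg_right,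
          real_inner_comm w (x i), Real.norm_eq_abs, mul_one, sq_abs]
        nlinarith
      have e1 : ‖x i + (inner ℝ w (x i)) • (-w)‖ < 1 := by
        nlinarith [norm_nonneg (x i + (inner ℝ w (x i)) • (-w))]
      refine ⟨-w, Finset.mem_image_of_mem _ hw, (1-s)*inner ℝ w (x i),
        mul_pos (by linarith) hin, hball ?_⟩
      rw [mem_ball, dist_zero_right]
      have e2 : (1-s) • x i + s • b + ((1-s)*inner ℝ w (x i)) • (-w) =
        (1-s) • (x i + (inner ℝ w (x i)) • (-w)) + s • b := by module
      rw [e2]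
      refine (norm_add_le _ _).trans_lt ?_
      rw [norm_smul, norm_smul, Real.norm_of_nonneg s0, Real.norm_of_nonneg (by linarith)]
      nlinarith

/-- Removing redundant vertices; the remaining ones form a packing. -/
theorem reduce (K : Set (EuclideanSpace ℝ (Fin 3)))
    (m : ℕ) (x : Fin m → EuclideanSpace ℝ (Fin 3)) (hx : ∀ i, 1 < ‖x i‖)
    (hK : K = ⋃ i, convexHull ℝ ({x i} ∪ closedBall 0 1)) (hconv : Convex ℝ K) :
    ∃ S : Finset (Fin m), K = (⋃ i ∈ S, convexHull ℝ ({x i} ∪ closedBall 0 1)) ∧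
      ∀ i ∈ S, ∀ j ∈ S, i ≠ j → ∃ l : ℝ, 0 < l ∧ l < 1 ∧ ‖(1-l) • x i + l • x j‖ ≤ 1 := by
  classical
  obtain ⟨S, hS, hmin⟩ := Finset.exists_min_image
    ((Finset.univ : Finset (Finset (Fin m))).filter
      (fun S => K = ⋃ i ∈ S, convexHull ℝ ({x i} ∪ closedBall 0 1))) Finset.card
    ⟨Finset.univ, by simp [hK]⟩
  simp only [Finset.mem_filter, Finset.mem_univ, true_and] at hS hmin
  have hnot : ∀ i ∈ S, ∀ j ∈ S, i ≠ j → x i ∉ convexHull ℝ ({x j} ∪ closedBall 0 1) := by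
    intro i hi j hj hij h
    have hsub : convexHull ℝ ({x i} ∪ closedBall 0 1) ⊆ convexHull ℝ ({x j} ∪ closedBall 0 1) := by
      apply convexHull_min _ (convex_convexHull ℝ _)
      rintro y (hy | hy)
      · rw [mem_singleton_iff.1 hy]; exact h
      · exact subset_convexHull ℝ _ (Or.inr hy)
    have := hmin (S.erase i) (by
      apply Subset.antisymm
      · rw [hS]
        intro y hy
        simp only [mem_iUnion] at hy ⊢
        obtain ⟨k, hk, hy⟩ := hy
        by_cases hki : k = i
        · subst hki
          exact ⟨j, Finset.mem_erase.2 ⟨hij.symm, hj⟩, hsub hy⟩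
        · exact ⟨k, Finset.mem_erase.2 ⟨hki, hk⟩, hy⟩
      · rw [hS]
        intro y hy
        simp only [mem_iUnion] at hy ⊢
        obtain ⟨k, hk, hy⟩ := hy
        exact ⟨k, Finset.mem_of_mem_erase hk, hy⟩)
    have h2 := Finset.card_erase_lt_of_mem hi
    omega
  refine ⟨S, hS, fun i hi j hj hij => ?_⟩
  have hxK : ∀ k, x k ∈ K := fun k => by
    rw [hK]; exact mem_iUnion.2 ⟨k, subset_convexHull ℝ _ (Or.inl rfl)⟩
  have hF : IsClosed (⋃ k ∈ S.erase i, convexHull ℝ ({x k} ∪ closedBall 0 1)) := by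
    refine (S.erase i).finite_toSet.isClosed_biUnion fun i _ => ?_
    exact hull_closed _
  have hxF : x i ∉ (⋃ k ∈ S.erase i, convexHull ℝ ({x k} ∪ closedBall 0 1)) := by
    simp only [mem_iUnion, not_exists]
    intro k hk
    exact hnot i hi k (Finset.mem_of_mem_erase hk) (Finset.ne_of_mem_erase hk).symm
  have hcont : Continuous (fun t : ℝ => (1-t) • x i + t • x j) := by fun_prop
  have hev : ∀ᶠ t in nhds (0:ℝ), (1-t) • x i + t • x j ∈
      (⋃ k ∈ S.erase i, convexHull ℝ ({x k} ∪ closedBall 0 1))ᶜ := by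
    apply hcont.continuousAt.eventually_mem
    apply hF.isOpen_compl.mem_nhds
    simpa using hxF
  obtain ⟨ε, hε, hball⟩ := Metric.eventually_nhds_iff.1 hev
  obtain ⟨t, ht0, htε, ht1⟩ : ∃ t : ℝ, 0 < t ∧ t < ε ∧ t < 1 := by
    refine ⟨min ε 1 / 2, by positivity, ?_, ?_⟩
    · have := min_le_left ε 1; linarith
    · have := min_le_right ε 1; linarith
  have h1 := hball (y := t) (by rw [Real.dist_eq, sub_zero, abs_of_pos ht0]; exact htε)
  have h2 : (1-t) • x i + t • x j ∈ K := hconv (hxK i) (hxK j) (by linarith) ht0.le (by ring)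
  rw [hS] at h2
  simp only [mem_iUnion] at h2
  obtain ⟨k, hk, h2⟩ := h2
  have hki : k = i := by
    by_contra hne
    exact h1 (by simp only [mem_iUnion]; exact ⟨k, Finset.mem_erase.2 ⟨hne, hk⟩, h2⟩)
  subst hki
  obtain ⟨s, s0, s1, b, hb, he⟩ := (hull_mem _ _).1 h2
  have hs : 0 < s := by
    refine lt_of_le_of_ne s0 fun h => ?_
    rw [← h] at he
    have : t • (x j - x k) = 0 := by
      have e : t • (x j - x k) = ((1-t) • x k + t • x j) - ((1-(0:ℝ)) • x k + (0:ℝ) • b) := by module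
      rw [e, he, sub_self]
    rcases smul_eq_zero.1 this with h | h
    · linarith
    · apply hnot k hk j hj hij
      rw [sub_eq_zero.1 h]
      exact subset_convexHull ℝ _ (Or.inl rfl)
  have hbe : b = (1 - t/s) • x k + (t/s) • x j := by
    have e : s • b = (s - t) • x k + t • x j := by
      have : s • b = ((1-s) • x k + s • b) - (1-s) • x k := by module
      rw [this, ← he]; module
    have : b = s⁻¹ • (s • b) := by rw [smul_smul, inv_mul_cancel₀ hs.ne', one_smul]
    rw [this, e, smul_add, smul_smul, smul_smul]
    congr 2 <;> field_simp
  refine ⟨t/s, by positivity, ?_, by rw [← hbe]; exact hb⟩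
  by_contra hge
  have hts : s ≤ t := by
    rw [not_lt, le_div_iff₀ hs] at hge; linarith
  apply hnot j hj k hk hij.symm
  refine (hull_mem _ _).2 ⟨s/t, by positivity, (div_le_one ht0).2 hts, b, hb, ?_⟩
  rw [hbe, smul_add, smul_smul, smul_smul, ← add_assoc, ← add_smul]
  have e1 : (1 - s/t + s/t*(1-t/s)) = 0 := by field_simp; ring
  have e2 : s/t*(t/s) = 1 := by field_simp
  rw [e1, e2, zero_smul, one_smul, zero_add]

theorem pack_inner (y y' : EuclideanSpace ℝ (Fin 3)) (hy : 1 < ‖y‖) (hy' : 1 < ‖y'‖)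
    (h : ∃ l : ℝ, 0 < l ∧ l < 1 ∧ ‖(1-l) • y + l • y'‖ ≤ 1) :
    inner ℝ y y' ≤ 1 - √(‖y‖^2-1) * √(‖y'‖^2-1) := by
  obtain ⟨l, l0, l1, hl⟩ := h
  have hA : √(‖y‖^2 - 1)^2 = ‖y‖^2 - 1 := Real.sq_sqrt (by nlinarith)
  have hA' : √(‖y'‖^2 - 1)^2 = ‖y'‖^2 - 1 := Real.sq_sqrt (by nlinarith)
  have h1 : ‖(1-l) • y + l • y'‖^2 ≤ 1 := by nlinarith [norm_nonneg ((1-l) • y + l • y')]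
  rw [norm_add_sq_real, norm_smul, norm_smul, inner_smul_left, inner_smul_right,
    Real.norm_of_nonneg l0.le, Real.norm_of_nonneg (by linarith : 0 ≤ 1-l)] at h1
  simp only [conj_trivial] at h1
  have hpos : 0 < 2*l*(1-l) := by have : 0 < 1-l := by linarith
                                  positivity
  refine le_of_mul_le_mul_left (a := 2*l*(1-l)) ?_ hpos
  have := sq_nonneg ((1-l)*√(‖y‖^2 - 1) - l*√(‖y'‖^2 - 1))
  have e : ((1-l)*√(‖y‖^2 - 1) - l*√(‖y'‖^2 - 1))^2 = (1-l)^2*(√(‖y‖^2 - 1)^2) +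
    l^2*(√(‖y'‖^2 - 1)^2) - 2*l*(1-l)*(√(‖y‖^2 - 1) * √(‖y'‖^2 - 1)) := by ring
  rw [hA, hA'] at e
  linarith

theorem half_param (N : ℝ) (hN : 1 < N) : ∃ q : ℝ, 0 < q ∧ q < 1 ∧ N = (1+q^2)/(2*q) ∧
    √(N^2-1) = (1-q^2)/(2*q) ∧ q * (N + √(N^2-1)) = 1 := by
  have hA : √(N^2 - 1)^2 = N^2 - 1 := Real.sq_sqrt (by nlinarith)
  have hA0 : 0 < √(N^2-1) := Real.sqrt_pos.2 (by nlinarith)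
  have h1 : √(N^2-1) < N := by nlinarith
  have hq : 0 < N - √(N^2-1) := by linarith
  refine ⟨N - √(N^2-1), hq, ?_, ?_, ?_, by nlinarith⟩
  · nlinarith
  · rw [eq_div_iff (by positivity)]; nlinarith
  · rw [eq_div_iff (by positivity)]; nlinarith

/-- The four oblique directions, in coordinates. -/
def obl (b : OrthonormalBasis (Fin 3) ℝ (EuclideanSpace ℝ (Fin 3))) (τ θ : ℝ) :
    EuclideanSpace ℝ (Fin 3) :=
  b.repr.symm !₂[-((1-τ^2)/(1+τ^2)), 2*τ/(1+τ^2) * cos θ, 2*τ/(1+τ^2) * sin θ]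

theorem obl_norm (b : OrthonormalBasis (Fin 3) ℝ (EuclideanSpace ℝ (Fin 3))) (τ θ : ℝ) :
    ‖obl b τ θ‖ = 1 := by
  rw [obl, LinearIsometryEquiv.norm_map, EuclideanSpace.norm_eq, Real.sqrt_eq_one,
    Fin.sum_univ_three]
  simp only [Real.norm_eq_abs, sq_abs]
  simp
  have h : (1+τ^2) ≠ 0 := by positivity
  have := Real.sin_sq_add_cos_sq θ
  have e : sin θ ^2 = 1 - cos θ ^2 := by linarith
  rw [mul_pow _ (sin θ), e]
  field_simp
  ring

theorem obl_inner (b : OrthonormalBasis (Fin 3) ℝ (EuclideanSpace ℝ (Fin 3))) (τ θ : ℝ)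
    (u : EuclideanSpace ℝ (Fin 3)) :
    inner ℝ (obl b τ θ) u = (2*τ*(cos θ * b.repr u 1 + sin θ * b.repr u 2)
      - (1-τ^2) * b.repr u 0)/(1+τ^2) := by
  rw [obl, ← b.repr.inner_map_map, LinearIsometryEquiv.apply_symm_apply, PiLp.inner_apply,
    Fin.sum_univ_three]
  simp
  ring

theorem obl_period (b : OrthonormalBasis (Fin 3) ℝ (EuclideanSpace ℝ (Fin 3))) (τ β : ℝ) (k : ℤ) :
    ∃ n ∈ Finset.range 4, obl b τ (β + (n : ℕ) * (π/2)) = obl b τ (β + k * (π/2)) := by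
  refine ⟨(k % 4).toNat, ?_, ?_⟩
  · rw [Finset.mem_range]; omega
  · have h1 : (((k % 4).toNat : ℕ) : ℝ) = ((k % 4 : ℤ) : ℝ) := by
      have : (((k % 4).toNat : ℕ) : ℤ) = k % 4 := Int.toNat_of_nonneg (by omega)
      exact_mod_cast this
    have h2 : β + k * (π/2) = β + ((k % 4).toNat : ℕ) * (π/2) + (k/4 : ℤ) * (2*π) := by
      have : (k:ℝ) = ((k % 4 : ℤ) : ℝ) + 4 * ((k / 4 : ℤ) : ℝ) := by
        exact_mod_cast (Int.emod_add_mul_ediv k 4).symm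
      rw [h1]
      nth_rewrite 1 [this]
      ring
    rw [h2, obl, obl, Real.cos_add_int_mul_two_pi, Real.sin_add_int_mul_two_pi]

theorem norm_coords (b : OrthonormalBasis (Fin 3) ℝ (EuclideanSpace ℝ (Fin 3)))
    (u : EuclideanSpace ℝ (Fin 3)) :
    ‖u‖^2 = b.repr u 0 ^2 + b.repr u 1 ^2 + b.repr u 2 ^2 := by
  rw [← b.repr.norm_map u, EuclideanSpace.norm_sq_eq, Fin.sum_univ_three]
  simp only [Real.norm_eq_abs, sq_abs]

/-- For every cap body `K` in Euclidean 3-space, the illumination number of `K`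
is at most 6. -/
theorem illumination_of_cap_bodies (K : Set (EuclideanSpace ℝ (Fin 3)))
    (m : ℕ) (hm : 0 < m) (x : Fin m → EuclideanSpace ℝ (Fin 3))
    (hx : ∀ i, 1 < ‖x i‖)
    (hK : K = ⋃ i, convexHull ℝ ({x i} ∪ closedBall 0 1))
    (hconv : Convex ℝ K) :
    illumNum K ≤ 6 := by
  classical
  obtain ⟨S, hKS, hpack⟩ := reduce K m x hx hK hconv
  have hS : S.Nonempty := by
    rw [Finset.nonempty_iff_ne_empty]
    rintro rfl
    have h0 : x ⟨0, hm⟩ ∈ K := by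
      rw [hK]; exact mem_iUnion.2 ⟨_, subset_convexHull ℝ _ (Or.inl rfl)⟩
    rw [hKS] at h0
    simp at h0
  obtain ⟨i₁, hi₁, hmax⟩ := Finset.exists_max_image S (fun i => ‖x i‖) hS
  have hn0 : 0 < ‖x i₁‖ := by linarith [hx i₁]
  obtain ⟨b, hb⟩ := exists_basis (‖x i₁‖⁻¹ • x i₁)
    (by rw [norm_smul, norm_inv, norm_norm, inv_mul_cancel₀ hn0.ne'])
  have hx1 : x i₁ = ‖x i₁‖ • b 0 := by rw [hb, smul_smul, mul_inv_cancel₀ hn0.ne', one_smul]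
  have hb0 : ‖b 0‖ = 1 := b.orthonormal.1 0
  have hrep : ∀ u, inner ℝ (b 0) u = b.repr u 0 := fun u => (b.repr_apply_apply u 0).symm
  obtain ⟨p, p0, p1, hap, hA1p, hpp⟩ := half_param _ (hx i₁)
  choose q q0 q1 hNq hAq hqq using fun i => half_param _ (hx i)
  have harea := area_bound S x (fun i _ => hx i) hpack
  have hinv : 0 < 1 + 1/‖x i₁‖ := by positivity
  have hR0 : ∀ i, 0 ≤ 1 - 1/‖x i‖ := fun i => by
    have : 1/‖x i‖ ≤ 1 := by rw [div_le_one (by linarith [hx i])]; exact (hx i).le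
    linarith
  obtain ⟨β, hβ⟩ := azimuth (S.erase i₁)
    (fun i => Complex.arg ⟨b.repr (x i) 1, b.repr (x i) 2⟩)
    (fun i => 24/25 * ((1 - 1/‖x i‖)/(1 + 1/‖x i₁‖)))
    (fun i _ => mul_nonneg (by norm_num) (div_nonneg (hR0 i) hinv.le))
    (by
      rw [← Finset.mul_sum, ← Finset.sum_div]
      rw [← Finset.add_sum_erase S _ hi₁] at harea
      have : (∑ i ∈ S.erase i₁, (1 - 1/‖x i‖))/(1 + 1/‖x i₁‖) ≤ 1 := by
        rw [div_le_one hinv]; linarith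
      linarith)
  set τ := 17/10*p with hτ
  have hτ0 : 0 < τ := by positivity
  have hτ1 : 0 < 1+τ^2 := by positivity
  refine illum_of K S x hx hKS hS
    ({b 0, -b 0} ∪ (Finset.range 4).image (fun n : ℕ => obl b τ (β + n * (π/2)))) ?_ ?_ ?_ ?_
  · refine (Finset.card_union_le _ _).trans ?_
    have h1 := Finset.card_le_two (a := b 0) (b := -b 0)
    have h2 := Finset.card_image_le (s := Finset.range 4) (f := fun n : ℕ => obl b τ (β + n * (π/2)))
    rw [Finset.card_range] at h2
    omega
  · intro w hw
    rcases Finset.mem_union.1 hw with hw | hw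
    · rcases Finset.mem_insert.1 hw with rfl | hw
      · exact hb0
      · rw [Finset.mem_singleton.1 hw, norm_neg, hb0]
    · obtain ⟨n, _, rfl⟩ := Finset.mem_image.1 hw
      exact obl_norm _ _ _
  · intro j hj
    by_cases hj1 : j = i₁
    · subst hj1
      refine ⟨b 0, by simp, ?_⟩
      have : inner ℝ (b 0) (x j) = ‖x j‖ := by
        nth_rewrite 1 [hx1]
        rw [inner_smul_right, real_inner_self_eq_norm_sq, hb0]; ring
      rw [this, Real.sqrt_lt' hn0]
      linarith
    · by_cases hz : √(‖x j‖^2-1) < -(b.repr (x j) 0)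
      · refine ⟨-b 0, by simp, ?_⟩
        rw [inner_neg_left, hrep]; exact hz
      · obtain ⟨k, hk⟩ := hβ j (Finset.mem_erase.2 ⟨hj1, hj⟩)
        obtain ⟨n, hn, hnk⟩ := obl_period b τ β k
        refine ⟨obl b τ (β + n * (π/2)),
          Finset.mem_union_right _ (Finset.mem_image_of_mem _ hn), ?_⟩
        rw [hnk, obl_inner, lt_div_iff₀ hτ1]
        set ζ : ℂ := ⟨b.repr (x j) 1, b.repr (x j) 2⟩ with hζ
        set B := 24/25 * ((1 - 1/‖x j‖)/(1 + 1/‖x i₁‖)) with hB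
        have hN1 : ‖x j‖ ≤ ‖x i₁‖ := hmax j hj
        have hBe : B = 24/25*((1-q j)^2*(1+p^2)/((1+(q j)^2)*(1+p)^2)) := by
          have e1 : 1 - 1/‖x j‖ = (1-q j)^2/(1+(q j)^2) := by
            rw [hNq j]
            have := q0 j
            have h2 : 1 + (q j)^2 ≠ 0 := by positivity
            field_simp
            ring
          have e2 : 1 + 1/‖x i₁‖ = (1+p)^2/(1+p^2) := by
            rw [hap]
            have h2 : 1 + p^2 ≠ 0 := by positivity
            field_simp
            ring
          rw [hB, e1, e2, div_div_div_eq]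
        have hB0 : 0 ≤ B := mul_nonneg (by norm_num) (div_nonneg (hR0 j) hinv.le)
        have hB1 : B ≤ 1 := by
          have : (1 - 1/‖x j‖)/(1 + 1/‖x i₁‖) ≤ 1 := by
            rw [div_le_one hinv]
            have : 0 < 1/‖x j‖ := by have := hx j; positivity
            have : 0 < 1/‖x i₁‖ := by positivity
            linarith
          rw [hB]; linarith
        have hcos : cos (π/4*(1-B)) ≤ cos (β + k * (π/2) - ζ.arg) := by
          rw [← Real.cos_abs (β + k * (π/2) - ζ.arg)]
          refine Real.cos_le_cos_of_nonneg_of_le_pi (abs_nonneg _) ?_ hk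
          nlinarith [Real.pi_pos]
        have hC : 707/1000 + 9/20 * ((1-q j)^2*(1+p^2)/((1+(q j)^2)*(1+p)^2))
              ≤ cos (β + k * (π/2) - ζ.arg) ∨
            79/100 + 19/100 * ((1-q j)^2*(1+p^2)/((1+(q j)^2)*(1+p)^2))
              ≤ cos (β + k * (π/2) - ζ.arg) := by
          rcases cosC B hB0 hB1 with h | h
          · left; rw [hBe] at h hcos; linarith
          · right; rw [hBe] at h hcos; linarith
        have hpq : p ≤ q j := by
          by_contra hlt
          rw [not_le] at hlt
          have h1 : √(‖x j‖^2-1) ≤ √(‖x i₁‖^2-1) := by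
            apply Real.sqrt_le_sqrt
            have := hx j
            nlinarith
          have h2 : 0 ≤ √(‖x j‖^2-1) := Real.sqrt_nonneg _
          have h3 : 0 < ‖x j‖ + √(‖x j‖^2-1) := by linarith [hx j]
          have h4 : q j * (‖x j‖ + √(‖x j‖^2-1)) < p * (‖x j‖ + √(‖x j‖^2-1)) :=
            mul_lt_mul_of_pos_right hlt h3
          have h5 : p * (‖x j‖ + √(‖x j‖^2-1)) ≤ p * (‖x i₁‖ + √(‖x i₁‖^2-1)) :=
            mul_le_mul_of_nonneg_left (by linarith) p0.le
          linarith [hqq j]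
        have hnorm := norm_coords b (x j)
        have hζ2 : ‖ζ‖^2 = b.repr (x j) 1^2 + b.repr (x j) 2^2 := by
          rw [Complex.sq_norm, Complex.normSq_apply, hζ]; ring
        have hin := pack_inner _ _ (hx i₁) (hx j) (hpack i₁ hi₁ j hj (Ne.symm hj1))
        have hin2 : inner ℝ (x i₁) (x j) = ‖x i₁‖ * b.repr (x j) 0 := by
          nth_rewrite 1 [hx1]
          rw [inner_smul_left, hrep]; simp
        rw [hin2] at hin
        have key := keyIneq p (q j) (cos (β + k * (π/2) - ζ.arg)) ‖x i₁‖ (√(‖x i₁‖^2-1)) ‖x j‖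
          (√(‖x j‖^2-1)) (-(b.repr (x j) 0)) ‖ζ‖ p0 hpq (q1 j) hC hap hA1p (hNq j) (hAq j)
          (norm_nonneg _) (by rw [hζ2, hnorm]; ring) (by linarith) (not_lt.1 hz)
        have hre : ‖ζ‖ * cos ζ.arg = b.repr (x j) 1 := Complex.norm_mul_cos_arg ζ
        have him : ‖ζ‖ * sin ζ.arg = b.repr (x j) 2 := Complex.norm_mul_sin_arg ζ
        rw [← hτ] at key
        refine key.trans_eq ?_
        rw [← hre, ← him, Real.cos_sub]
        ring
  · intro u hu0
    have hnorm := norm_coords b u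
    have hupos : 0 < ‖u‖^2 := by have := norm_pos_iff.2 hu0; positivity
    rcases lt_trichotomy (b.repr u 0) 0 with h | h | h
    · exact ⟨-b 0, by simp, by rw [inner_neg_left, hrep]; linarith⟩
    · have hsc := Real.sin_sq_add_cos_sq β
      set X := cos β * b.repr u 1 + sin β * b.repr u 2 with hX
      set Y := -sin β * b.repr u 1 + cos β * b.repr u 2 with hY
      have hXY : X^2 + Y^2 = ‖u‖^2 := by
        rw [hnorm, h, hX, hY]
        linear_combination (b.repr u 1 ^2 + b.repr u 2 ^2) * hsc
      have hmem : ∀ n < 4, 0 < cos (β + (n:ℕ) * (π/2)) * b.repr u 1 +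
          sin (β + (n:ℕ) * (π/2)) * b.repr u 2 →
          ∃ w ∈ ({b 0, -b 0} ∪ (Finset.range 4).image (fun n : ℕ => obl b τ (β + n * (π/2)))),
            0 < inner ℝ w u := by
        intro n hn hpos
        refine ⟨_, Finset.mem_union_right _ (Finset.mem_image_of_mem _ (Finset.mem_range.2 hn)), ?_⟩
        rw [obl_inner, h, mul_zero, sub_zero]
        positivity
      have c1 : cos (β + π/2) = -sin β := Real.cos_add_pi_div_two β
      have s1 : sin (β + π/2) = cos β := Real.sin_add_pi_div_two β
      rcases lt_trichotomy X 0 with hX0 | hX0 | hX0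
      · apply hmem 2 (by norm_num)
        rw [show β + ((2:ℕ):ℝ) * (π/2) = β + π by push_cast; ring, Real.cos_add_pi,
          Real.sin_add_pi]
        linarith
      · rcases lt_trichotomy Y 0 with hY0 | hY0 | hY0
        · apply hmem 3 (by norm_num)
          rw [show β + ((3:ℕ):ℝ) * (π/2) = β + π/2 + π by push_cast; ring, Real.cos_add_pi,
            Real.sin_add_pi, c1, s1]
          linarith
        · rw [hX0, hY0] at hXY; linarith
        · apply hmem 1 (by norm_num)
          rw [show β + ((1:ℕ):ℝ) * (π/2) = β + π/2 by push_cast; ring, c1, s1]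
          linarith
      · apply hmem 0 (by norm_num)
        rw [show β + ((0:ℕ):ℝ) * (π/2) = β by push_cast; ring]
        linarith
    · exact ⟨b 0, by simp, by rw [hrep]; exact h⟩

end
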